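/- Let k ∈ ℕ with k ≥ 1 and let u(y) = exp(i y^{2k+1}) for y ∈ ℝ. Then the Gabor wave front set of u equals the positive frequency half-axis: WF(u) = {0} × { ξ ∈ ℝ : ξ > 0 } ⊆ ℝ² \ {0}. -/

import Mathlib

open MeasureTheory

namespace Stmt15

/-- Gaussian-window short-time Fourier transform of `u : ℝ → ℂ`:
`Vu(x,ξ) = ∫ u(y) e^{−iyξ} e^{−(y−x)²} dy`. -/
noncomputable def STFT (u : ℝ → ℂ) (x ξ : ℝ) : ℂ :=
  ∫ y : ℝ, u y * Complex.exp (-(Complex.I) * (y : ℂ) * (ξ : ℂ))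
    * Complex.exp (-(((y - x) ^ 2 : ℝ) : ℂ))

/-- An open cone in `ℝ² \ {0}`. -/
def IsOpenCone (Γ : Set (ℝ × ℝ)) : Prop :=
  IsOpen Γ ∧ (0 : ℝ × ℝ) ∉ Γ ∧ ∀ z ∈ Γ, ∀ r : ℝ, 0 < r → r • z ∈ Γ

/-- The Gabor wave front set of `u : ℝ → ℂ`: the set of `z₀ ∈ ℝ² \ {0}` such that there is
no open cone containing `z₀` on which `Vu` decays faster than any power. -/
def gaborWF (u : ℝ → ℂ) : Set (ℝ × ℝ) :=
  {z | z ≠ 0 ∧ ¬ ∃ Γ : Set (ℝ × ℝ), IsOpenCone Γ ∧ z ∈ Γ ∧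
    ∀ N : ℕ, ∃ M : ℝ, ∀ w ∈ Γ,
      (1 + w.1 ^ 2 + w.2 ^ 2) ^ ((N : ℝ) / 2) * ‖STFT u w.1 w.2‖ ≤ M}


lemma taylor_bd (m : ℕ) : ∃ C : ℝ, 0 ≤ C ∧ ∀ y η : ℝ, 0 ≤ η → η ≤ 1 →
    ‖((y:ℂ) + η * Complex.I)^(m+2) - (y:ℂ)^(m+2) - (m+2) * (η * Complex.I) * (y:ℂ)^(m+1)‖
      ≤ C * η^2 * (1+|y|)^m := by
  induction m with
  | zero =>
    refine ⟨1, by norm_num, fun y η h0 h1 => ?_⟩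
    have : ((y:ℂ) + η * Complex.I)^(0+2) - (y:ℂ)^(0+2) - (((0:ℕ):ℂ)+2) * (η * Complex.I) * (y:ℂ)^(0+1)
      = ((-η^2 : ℝ) : ℂ) := by
      push_cast
      linear_combination (η:ℂ)^2 * Complex.I_sq
    rw [this, Complex.norm_real]
    simp
  | succ m ih =>
    obtain ⟨C, hC, h⟩ := ih
    refine ⟨C + (m+2), by positivity, fun y η h0 h1 => ?_⟩
    have e : ((y:ℂ) + η * Complex.I)^(m+1+2) - (y:ℂ)^(m+1+2)
          - (((m+1:ℕ):ℂ)+2) * (η * Complex.I) * (y:ℂ)^(m+1+1)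
        = ((y:ℂ) + η * Complex.I) * (((y:ℂ) + η * Complex.I)^(m+2) - (y:ℂ)^(m+2)
            - (m+2) * (η * Complex.I) * (y:ℂ)^(m+1))
          + ((-((m+2) * η^2 * y^(m+1)) : ℝ) : ℂ) := by
      push_cast
      linear_combination ((m:ℂ)+2) * (η:ℂ)^2 * (y:ℂ)^(m+1) * Complex.I_sq
    rw [e]
    refine (norm_add_le _ _).trans ?_
    rw [norm_mul, Complex.norm_real]
    have h2 : ‖(y:ℂ) + η * Complex.I‖ ≤ 1 + |y| := by
      refine (norm_add_le _ _).trans ?_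
      rw [norm_mul, Complex.norm_real, Complex.norm_real, Complex.norm_I, Real.norm_eq_abs,
        Real.norm_eq_abs, abs_of_nonneg h0]
      linarith
    have h3 : ‖(-((m+2) * η^2 * y^(m+1)) : ℝ)‖ ≤ (m+2) * η^2 * (1+|y|)^(m+1) := by
      rw [norm_neg, norm_mul, norm_pow, Real.norm_of_nonneg (by positivity), Real.norm_eq_abs]
      gcongr
      linarith
    have h4 := mul_le_mul h2 (h y η h0 h1) (norm_nonneg _) (by positivity)
    calc _ ≤ _ := add_le_add h4 h3
      _ = _ := by ring

lemma im_bd (k : ℕ) (hk : 1 ≤ k) : ∃ K : ℝ, 0 ≤ K ∧ ∀ y η : ℝ, 0 ≤ η → η ≤ 1 →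
    η * (y^2 - K) ≤ (((y:ℂ) + η * Complex.I)^(2*k+1)).im := by
  obtain ⟨j, rfl⟩ : ∃ j, k = j + 1 := ⟨k-1, by omega⟩
  obtain ⟨C, hC, h⟩ := taylor_bd (2*j+1)
  set D : ℝ := C * 2^(2*j+1) with hD
  have hD0 : 0 ≤ D := by positivity
  refine ⟨1 + C * (2+D)^(2*j+1), by positivity, fun y η h0 h1 => ?_⟩
  have h5 := (Complex.abs_im_le_norm _).trans (h y η h0 h1)
  have e : ((2*j+1:ℕ):ℂ) + 2 = ((2*j+3:ℝ):ℂ) := by push_cast; ring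
  have e2 : (((y:ℂ) + η * Complex.I)^(2*j+1+2) - (y:ℂ)^(2*j+1+2)
      - (((2*j+1:ℕ):ℂ)+2) * (η * Complex.I) * (y:ℂ)^(2*j+1+1)).im
      = (((y:ℂ) + η * Complex.I)^(2*(j+1)+1)).im - (2*j+3) * η * y^(2*j+2) := by
    rw [e, Complex.sub_im, Complex.sub_im, ← Complex.ofReal_pow, Complex.ofReal_im]
    have : (((2*j+3:ℝ):ℂ)) * (η * Complex.I) * (y:ℂ)^(2*j+1+1)
       = (((2*j+3) * η * y^(2*j+2) : ℝ):ℂ) * Complex.I := by push_cast; ring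
    rw [this, Complex.im_ofReal_mul, Complex.I_im, mul_one, sub_zero]
    ring_nf
  rw [e2] at h5
  have h6 := (abs_le.1 h5).1
  have h7 : C * (1+|y|)^(2*j+1) ≤ 2 * y^(2*j+2) + C * (2+D)^(2*j+1) := by
    have hp : y^(2*j+2) = |y| * |y|^(2*j+1) := by
      rw [← pow_succ', show 2*j+1+1 = 2*(j+1) by ring, pow_mul, pow_mul, sq_abs]
    have hy := abs_nonneg y
    by_cases hc : 1 + D ≤ |y|
    · have h1y : 1 + |y| ≤ 2 * |y| := by linarith
      have : C * (1+|y|)^(2*j+1) ≤ D * |y|^(2*j+1) := by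
        calc _ ≤ C * (2*|y|)^(2*j+1) := by gcongr
          _ = _ := by rw [mul_pow, hD]; ring
      have h3 : D * |y|^(2*j+1) ≤ |y| * |y|^(2*j+1) := by
        gcongr
        linarith
      have h4 : 0 ≤ C * (2+D)^(2*j+1) := by positivity
      have h5 : 0 ≤ |y| * |y|^(2*j+1) := by positivity
      rw [hp]
      linarith
    · have : C * (1+|y|)^(2*j+1) ≤ C * (2+D)^(2*j+1) := by
        gcongr C * ?_^(2*j+1)
        linarith
      have h5 : 0 ≤ |y| * |y|^(2*j+1) := by positivity
      rw [hp]
      linarith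
  have h8 : y^2 - 1 ≤ y^(2*j+2) := by
    rw [show 2*j+2 = 2*(j+1) by ring, pow_mul]
    by_cases h : 1 ≤ y^2
    · have : (y^2)^1 ≤ (y^2)^(j+1) := pow_le_pow_right₀ h (by omega)
      linarith [pow_one (y^2)]
    · have : 0 ≤ (y^2)^(j+1) := by positivity
      linarith
  have h9 : 0 ≤ y^(2*j+2) := by
    rw [show 2*j+2 = 2*(j+1) by ring, pow_mul]; positivity
  have h10 : C * η^2 * (1+|y|)^(2*j+1) ≤ η * (C * (1+|y|)^(2*j+1)) := by
    have : η^2 ≤ η := by nlinarith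
    calc _ ≤ C * η * (1+|y|)^(2*j+1) := by gcongr
      _ = _ := by ring
  have h11 : y^2 - (1 + C * (2+D)^(2*j+1)) ≤ (2*j+3) * y^(2*j+2) - C * (1+|y|)^(2*j+1) := by
    have : 0 ≤ (j:ℝ) * y^(2*j+2) := by positivity
    linarith
  have := mul_le_mul_of_nonneg_left h11 h0
  nlinarith

lemma shift (F : ℂ → ℂ) (hF : Differentiable ℂ F) (B x : ℝ)
    (hB : ∀ y η : ℝ, 0 ≤ η → η ≤ 1 → ‖F (y + η * Complex.I)‖ ≤ B * Real.exp (-(y-x)^2)) :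
    ∫ y : ℝ, F y = ∫ y : ℝ, F (y + Complex.I) := by
  have hg : Integrable (fun y : ℝ => B * Real.exp (-(y-x)^2)) := by
    have := ((integrable_exp_neg_mul_sq (b := 1) (by norm_num)).comp_sub_right x).const_mul B
    simpa using this
  have hi0 : Integrable (fun y : ℝ => F y) := by
    refine hg.mono' ?_ (.of_forall fun y => ?_)
    · exact (hF.continuous.comp Complex.continuous_ofReal).aestronglyMeasurable
    · simpa using hB y 0 le_rfl zero_le_one
  have hi1 : Integrable (fun y : ℝ => F (y + Complex.I)) := by
    refine hg.mono' ?_ (.of_forall fun y => ?_)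
    · exact (hF.continuous.comp (by fun_prop)).aestronglyMeasurable
    · simpa using hB y 1 zero_le_one le_rfl
  have hB0 : Filter.Tendsto (fun R : ℝ => B * Real.exp (-(R-x)^2) + B * Real.exp (-(-R-x)^2))
      Filter.atTop (nhds 0) := by
    have a1 : Filter.Tendsto (fun R : ℝ => R - x) Filter.atTop Filter.atTop :=
      Filter.tendsto_atTop_add_const_right _ _ Filter.tendsto_id
    have a2 : Filter.Tendsto (fun R : ℝ => R + x) Filter.atTop Filter.atTop :=
      Filter.tendsto_atTop_add_const_right _ _ Filter.tendsto_id
    have b : Filter.Tendsto (fun t : ℝ => B * Real.exp (-t^2)) Filter.atTop (nhds (B * 0)) :=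
      (Real.tendsto_exp_neg_atTop_nhds_zero.comp
        (Filter.tendsto_pow_atTop (n := 2) (by norm_num))).const_mul B
    have := (b.comp a1).add (b.comp a2)
    simp only [mul_zero, add_zero] at this
    refine this.congr fun R => ?_
    simp only [Function.comp]
    rw [show (-R-x)^2 = (R+x)^2 by ring]
  have t0 := intervalIntegral_tendsto_integral hi0 Filter.tendsto_neg_atTop_atBot Filter.tendsto_id
  have t1 := intervalIntegral_tendsto_integral hi1 Filter.tendsto_neg_atTop_atBot Filter.tendsto_id
  have t2 := t0.sub t1
  have t3 : Filter.Tendsto (fun R : ℝ => (∫ y in (-R)..R, F y) - ∫ y in (-R)..R, F (y + Complex.I))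
      Filter.atTop (nhds 0) := by
    refine squeeze_zero_norm (fun R => ?_) hB0
    have := Complex.integral_boundary_rect_eq_zero_of_differentiableOn F ((-R:ℝ):ℂ) (R + Complex.I)
      hF.differentiableOn
    simp at this
    have hv : ∀ S : ℝ, ‖∫ η in (0:ℝ)..1, F (S + η * Complex.I)‖ ≤ B * Real.exp (-(S-x)^2) := by
      intro S
      have := intervalIntegral.norm_integral_le_of_norm_le_const (a := 0) (b := 1)
        (f := fun η : ℝ => F (S + η * Complex.I)) (C := B * Real.exp (-(S-x)^2)) (fun η hη => by
          rw [Set.uIoc_of_le zero_le_one] at hη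
          exact hB S η hη.1.le hη.2)
      simpa using this
    have h1 := hv R
    have h2 := hv (-R)
    have e : (∫ y in (-R)..R, F y) - (∫ y in (-R)..R, F (y + Complex.I))
      = Complex.I * (∫ η in (0:ℝ)..1, F (((-R:ℝ):ℂ) + η * Complex.I))
        - Complex.I * ∫ η in (0:ℝ)..1, F (R + η * Complex.I) := by
      push_cast
      linear_combination this
    rw [e]
    refine (norm_sub_le _ _).trans ?_
    rw [norm_mul, norm_mul, Complex.norm_I, one_mul, one_mul]
    linarith
  exact sub_eq_zero.1 (tendsto_nhds_unique t2 t3)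

/-- The entire integrand. -/
noncomputable def FF (n : ℕ) (x ξ : ℝ) (z : ℂ) : ℂ :=
  Complex.exp (Complex.I * z ^ n - Complex.I * z * ξ - (z - x)^2)

lemma stft_eq (n : ℕ) (x ξ : ℝ) :
    STFT (fun y : ℝ => Complex.exp (Complex.I * (y : ℂ) ^ n)) x ξ = ∫ y : ℝ, FF n x ξ y := by
  unfold STFT FF
  congr 1
  ext y
  rw [← Complex.exp_add, ← Complex.exp_add]
  congr 1
  push_cast
  ring

lemma norm_FF (n : ℕ) (x ξ y η : ℝ) :
    ‖FF n x ξ (y + η * Complex.I)‖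
      = Real.exp (-(((y:ℂ) + η * Complex.I)^n).im + η * ξ - (y-x)^2 + η^2) := by
  unfold FF
  rw [Complex.norm_exp]
  congr 1
  simp [pow_two]
  ring

lemma stft_bd (k : ℕ) (hk : 1 ≤ k) : ∃ A : ℝ, 0 ≤ A ∧ ∀ x ξ : ℝ,
    ‖STFT (fun y : ℝ => Complex.exp (Complex.I * (y : ℂ) ^ (2*k+1))) x ξ‖
      ≤ A * Real.exp (ξ - x^2/2) := by
  obtain ⟨K, hK, h⟩ := im_bd k hk
  refine ⟨Real.exp (K+1) * ∫ y : ℝ, Real.exp (-2 * y^2), ?_, fun x ξ => ?_⟩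
  · have : 0 ≤ ∫ y : ℝ, Real.exp (-2 * y^2) := integral_nonneg fun y => (Real.exp_pos _).le
    positivity
  rw [stft_eq, shift (FF (2*k+1) x ξ) (by unfold FF; fun_prop) (Real.exp (K + |ξ| + 1)) x]
  · have hi : Integrable (fun y : ℝ => Real.exp (K+1+ξ - x^2/2) * Real.exp (-2 * (y - x/2)^2)) :=
      ((integrable_exp_neg_mul_sq (b := 2) (by norm_num)).comp_sub_right (x/2)).const_mul _
    refine (norm_integral_le_of_norm_le hi (.of_forall fun y => ?_)).trans ?_
    · have e := norm_FF (2*k+1) x ξ y 1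
      have h1 := h y 1 zero_le_one le_rfl
      simp only [Complex.ofReal_one, one_mul] at e h1
      rw [e, ← Real.exp_add]
      apply Real.exp_le_exp.2
      nlinarith
    · rw [integral_const_mul, integral_sub_right_eq_self (fun y : ℝ => Real.exp (-2 * y^2))]
      apply le_of_eq
      rw [show K+1+ξ - x^2/2 = (K+1) + (ξ - x^2/2) by ring, Real.exp_add]
      ring
  · intro y η h0 h1
    rw [norm_FF, ← Real.exp_add]
    apply Real.exp_le_exp.2
    have h2 := h y η h0 h1
    have h3 : η * ξ ≤ |ξ| := by
      calc η * ξ ≤ η * |ξ| := by gcongr; exact le_abs_self _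
        _ ≤ 1 * |ξ| := by gcongr
        _ = _ := one_mul _
    have h4 : η * K ≤ K := by nlinarith
    have h5 : 0 ≤ η * y^2 := by positivity
    have h6 : η^2 ≤ 1 := by nlinarith
    nlinarith

lemma cone_bd (k : ℕ) (hk : 1 ≤ k) (c : ℝ) (hc : 0 < c) (N : ℕ) : ∃ M : ℝ, ∀ x ξ : ℝ, ξ < c * |x| →
    (1 + x^2 + ξ^2) ^ ((N:ℝ)/2) *
      ‖STFT (fun y : ℝ => Complex.exp (Complex.I * (y : ℂ) ^ (2*k+1))) x ξ‖ ≤ M := by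
  obtain ⟨A, hA, h⟩ := stft_bd k hk
  refine ⟨N.factorial * A * Real.exp ((2*c+1)^2/2 + 1), fun x ξ hx => ?_⟩
  have hax := abs_nonneg x
  have haξ := abs_nonneg ξ
  have h1 : (1 + x^2 + ξ^2) ^ ((N:ℝ)/2) ≤ (1 + |x| + |ξ|)^N := by
    calc (1 + x^2 + ξ^2) ^ ((N:ℝ)/2) ≤ ((1 + |x| + |ξ|)^2) ^ ((N:ℝ)/2) := by
          apply Real.rpow_le_rpow (by positivity) _ (by positivity)
          rw [← sq_abs x, ← sq_abs ξ]
          nlinarith [mul_nonneg hax haξ]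
      _ = _ := by
          rw [← Real.rpow_natCast, ← Real.rpow_mul (by positivity), ← Real.rpow_natCast]
          congr 1
          push_cast
          ring
  have h2 : (1 + |x| + |ξ|)^N ≤ N.factorial * Real.exp (1 + |x| + |ξ|) := by
    have := Real.pow_div_factorial_le_exp (1 + |x| + |ξ|) (by positivity) N
    rw [div_le_iff₀ (by positivity)] at this
    linarith
  have h3 : ξ - x^2/2 ≤ (2*c+1)^2/2 - |x| - |ξ| := by
    have : ξ + |ξ| ≤ 2 * (c * |x|) := by
      rcases abs_cases ξ with ⟨h, _⟩ | ⟨h, _⟩ <;> rw [h] <;> nlinarith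
    rw [← sq_abs x]
    nlinarith [sq_nonneg (|x| - (2*c+1))]
  calc _ ≤ (N.factorial * Real.exp (1 + |x| + |ξ|)) * (A * Real.exp ((2*c+1)^2/2 - |x| - |ξ|)) := by
        apply mul_le_mul (h1.trans h2) _ (norm_nonneg _) (by positivity)
        exact (h x ξ).trans (by gcongr)
    _ = N.factorial * A * (Real.exp (1 + |x| + |ξ|) * Real.exp ((2*c+1)^2/2 - |x| - |ξ|)) := by ring
    _ = _ := by
        rw [← Real.exp_add]
        congr 2
        ring

open scoped FourierTransform in
lemma inversion (n : ℕ) (x B : ℝ)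
    (h : ∀ ξ : ℝ, ‖STFT (fun y : ℝ => Complex.exp (Complex.I * (y : ℂ) ^ n)) x ξ‖
      ≤ B * (1 + ξ^2)⁻¹) : 1 ≤ B * Real.pi := by
  have hB : 0 ≤ B := by simpa using (norm_nonneg _).trans (h 0)
  set g : ℝ → ℂ := fun y => Complex.exp (Complex.I * (y : ℂ) ^ n)
    * Complex.exp (-(((y - x) ^ 2 : ℝ) : ℂ)) with hg
  have gn : ∀ y, ‖g y‖ = Real.exp (-(y-x)^2) := by
    intro y
    rw [hg]
    simp only [norm_mul, Complex.norm_exp]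
    rw [← Complex.ofReal_neg, Complex.ofReal_re]
    rw [← Complex.ofReal_pow, Complex.re_mul_ofReal, Complex.I_re, zero_mul, Real.exp_zero, one_mul]
  have gc : Continuous g := by fun_prop
  have gi : Integrable g := by
    have : Integrable (fun y : ℝ => Real.exp (-(y-x)^2)) := by
      simpa using (integrable_exp_neg_mul_sq (b := 1) (by norm_num)).comp_sub_right x
    exact this.mono' gc.aestronglyMeasurable (.of_forall fun y => (gn y).le)
  have hF : ∀ w : ℝ, 𝓕 g w = STFT (fun y : ℝ => Complex.exp (Complex.I * (y : ℂ) ^ n)) x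
      (2 * Real.pi * w) := by
    intro w
    rw [Real.fourier_eq']
    unfold STFT
    congr 1
    ext y
    rw [hg]
    simp only [smul_eq_mul]
    rw [← Complex.exp_add, ← Complex.exp_add, ← Complex.exp_add, ← Complex.exp_add]
    congr 1
    simp
    ring
  have hb : ∀ w : ℝ, ‖𝓕 g w‖ ≤ B * (1 + w^2)⁻¹ := by
    intro w
    rw [hF]
    refine (h _).trans ?_
    gcongr B * (1 + ?_)⁻¹
    rw [mul_pow]
    have := Real.pi_gt_three
    have h1 : 1 ≤ (2 * Real.pi)^2 := by nlinarith
    nlinarith [sq_nonneg w]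
  have hm : Integrable (fun w : ℝ => B * (1 + w^2)⁻¹) := integrable_inv_one_add_sq.const_mul B
  have fc : Continuous (𝓕 g) :=
    VectorFourier.fourierIntegral_continuous Real.continuous_fourierChar (by exact continuous_inner) gi
  have fi : Integrable (𝓕 g) := hm.mono' fc.aestronglyMeasurable (.of_forall hb)
  have e := gi.fourierInv_fourier_eq fi (v := x) gc.continuousAt
  have e1 : ‖g x‖ = 1 := by rw [gn]; simp
  rw [← e1, ← e, Real.fourierInv_eq']
  refine (norm_integral_le_of_norm_le hm (.of_forall fun w => ?_)).trans ?_
  · rw [norm_smul, Complex.norm_exp_ofReal_mul_I, one_mul]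
    exact hb w
  · rw [integral_const_mul, integral_univ_inv_one_add_sq]

/-- Proposition `WFairy`.  For `k ≥ 1`, the Gabor wave front set of
`u(y) = exp(i y^{2k+1})` is the positive frequency half-axis `{0} × ℝ₊`. -/
theorem stmt_15 (k : ℕ) (hk : 1 ≤ k) :
    gaborWF (fun y : ℝ => Complex.exp (Complex.I * (y : ℂ) ^ (2 * k + 1)))
      = {z : ℝ × ℝ | z.1 = 0 ∧ 0 < z.2} := by
  ext ⟨x₀, ξ₀⟩
  simp only [gaborWF, Set.mem_setOf_eq]
  constructor
  · rintro ⟨hz, hn⟩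
    by_contra hcon
    apply hn
    obtain ⟨c, hc, hlt⟩ : ∃ c : ℝ, 0 < c ∧ ξ₀ < c * |x₀| := by
      by_cases hx : x₀ = 0
      · refine ⟨1, one_pos, ?_⟩
        subst hx
        have h1 : ξ₀ ≠ 0 := fun h => hz (by simp [h])
        have h2 : ¬ 0 < ξ₀ := fun h => hcon ⟨rfl, h⟩
        simpa using lt_of_le_of_ne (not_lt.1 h2) h1
      · have hx' : 0 < |x₀| := abs_pos.2 hx
        refine ⟨(|ξ₀| + 1) / |x₀|, by positivity, ?_⟩
        rw [div_mul_cancel₀ _ hx'.ne']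
        linarith [le_abs_self ξ₀]
    refine ⟨{w | w.2 < c * |w.1|}, ⟨?_, by simp, ?_⟩, hlt, fun N => ?_⟩
    · exact isOpen_lt (by fun_prop) (by fun_prop)
    · rintro ⟨x, ξ⟩ hw r hr
      simp only [Set.mem_setOf_eq, Prod.smul_mk, smul_eq_mul] at hw ⊢
      rw [abs_mul, abs_of_pos hr]
      nlinarith
    · obtain ⟨M, hM⟩ := cone_bd k hk c hc N
      exact ⟨M, fun w hw => hM w.1 w.2 hw⟩
  · rintro ⟨rfl, hξ⟩
    refine ⟨fun h => hξ.ne' (by simpa using h), ?_⟩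
    rintro ⟨Γ, ⟨ho, -, hcone⟩, hmem, hdec⟩
    obtain ⟨ε, hε, hball⟩ := Metric.isOpen_iff.1 ho _ hmem
    set c : ℝ := 2 * ξ₀ / ε with hcdef
    have hc : 0 < c := by positivity
    obtain ⟨M₁, hM₁⟩ := hdec 4
    obtain ⟨M₂, hM₂⟩ := cone_bd k hk c hc 4
    have key : ∀ x ξ : ℝ, 0 < x → (1 + x^2 + ξ^2)^2 *
        ‖STFT (fun y : ℝ => Complex.exp (Complex.I * (y : ℂ) ^ (2*k+1))) x ξ‖ ≤ max M₁ M₂ := by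
      intro x ξ hx
      have e : (1 + x^2 + ξ^2)^2 = (1 + x^2 + ξ^2) ^ (((4:ℕ):ℝ)/2) := by
        rw [← Real.rpow_natCast]
        norm_num
      rw [e]
      by_cases hlt : ξ < c * |x|
      · exact (hM₂ x ξ hlt).trans (le_max_right _ _)
      · refine (hM₁ (x, ξ) ?_).trans (le_max_left _ _)
        rw [abs_of_pos hx, not_lt] at hlt
        have hp : 0 < ξ := lt_of_lt_of_le (by positivity) hlt
        have hin : ((x * ξ₀ / ξ, ξ₀) : ℝ × ℝ) ∈ Γ := by
          apply hball
          rw [Metric.mem_ball, Prod.dist_eq]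
          simp only [dist_self, Real.dist_eq, sub_zero]
          rw [abs_of_pos (by positivity)]
          apply max_lt _ hε
          rw [div_lt_iff₀ hp]
          rw [hcdef, div_mul_eq_mul_div, div_le_iff₀ hε] at hlt
          nlinarith [mul_pos hξ hx]
        have := hcone _ hin (ξ / ξ₀) (by positivity)
        convert this using 1
        simp only [Prod.smul_mk, smul_eq_mul]
        congr 1 <;> field_simp
    set M := max M₁ M₂
    have hM0 : 0 ≤ M := le_trans (by positivity) (key 1 0 one_pos)
    have fin : ∀ x : ℝ, 0 < x → 1 ≤ (M / (1 + x^2)) * Real.pi := by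
      intro x hx
      refine inversion (2*k+1) x _ fun ξ => ?_
      rw [← div_eq_mul_inv, div_div, le_div_iff₀ (by positivity), mul_comm]
      refine le_trans ?_ (key x ξ hx)
      gcongr
      nlinarith [sq_nonneg x, sq_nonneg ξ, mul_nonneg (sq_nonneg x) (sq_nonneg ξ), sq_nonneg (x^2), sq_nonneg (ξ^2)]
    have := fin (M * Real.pi + 1) (by positivity)
    rw [div_mul_eq_mul_div, le_div_iff₀ (by positivity)] at this
    have : 0 ≤ M * Real.pi := by positivity
    nlinarith

end Stmt15
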